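/- Fix 0 < H < 1/2 and T > 0, and define II(s;T,t) := (1/2 − H)·B_{T/(t+T)}(H+1/2, 1−2H)·(t/T)^{1/2+H}·(1 + T/t)·(s(1−s))^{−1/2−H} for 0 < s < 1 and t > 0, where B_x(p,q) = ∫_0^x u^{p−1}(1−u)^{q−1} du is the incomplete beta function. Let g be a positive measurable function on [0,∞) that is locally bounded and regularly varying with index ρ > −1/2 + H. Then lim_{t→∞} ∫_0^1 II(s;T,t)·(g(ts)/g(t)) ds = (1/2 − H)·B(1/2−H+ρ, 1/2−H) / (1/2 + H). -/

import Mathlib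

/-!
The kernel factors as `c(t) * (s (1 - s)) ^ (-(1/2 + H))`. Since `incBeta x p q ~ x ^ p / p` as
`x → 0+`, the prefactor satisfies `c(t) → (1/2 - H) / (1/2 + H)` (`tendsto_incBeta_mul`).

It remains to pass to the limit in `∫ (s (1 - s)) ^ (-(1/2 + H)) * g (t s) / g t ds`, where the
integrand converges pointwise to the integrand of `B(1/2 - H + ρ, 1/2 - H)`. Domination comes from
a Potter-type bound `g (t s) / g t ≤ C s ^ a` (`exists_potter_bound`) with
`-1/2 + H < a < min ρ 0`. This says that `h x = x ^ (-a) * g x`, regularly varying of positive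
index `ρ - a`, is almost increasing: `h y ≤ C h x` for `y ≤ x`. In logarithmic coordinates
`k x = log (h (exp x))` has increments `k (x + u) - k x → (ρ - a) u`; a Steinhaus-type measure
argument bounds the drops of `k` over intervals of length at most one
(`exists_local_drop_bound`), and eventual positivity of unit-step increments does the rest
(`exists_almost_mono`). Near `0`, the function `h` is bounded because `-a ≥ 0` and `g` is locally
bounded.
-/

open Real MeasureTheory Filter Set intervalIntegral

/-- Incomplete beta function `B_x(p,q) = ∫_0^x u^{p-1} (1-u)^{q-1} du`. -/
noncomputable def incBeta (x p q : ℝ) : ℝ := ∫ u in (0:ℝ)..x, u ^ (p - 1) * (1 - u) ^ (q - 1)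

/-- Beta function `B(p,q) = ∫_0^1 u^{p-1} (1-u)^{q-1} du`. -/
noncomputable def betaFn (p q : ℝ) : ℝ := incBeta 1 p q

/-- Infinite-past predictor coefficient `ψ₀(s;T)` of fractional Brownian motion. -/
noncomputable def psi0inf (H T s : ℝ) : ℝ :=
  (Real.cos (π * H) / π) * (1 / (s + T)) * (T / s) ^ (1/2 + H)

/-- Finite-past predictor coefficient `ψ₀(s;T,t)` of fractional Brownian motion. -/
noncomputable def psi0fin (H T t s : ℝ) : ℝ :=
  (Real.cos (π * H) / π) *
    ((1 / (s + T)) * (T / s) ^ (1/2 + H) * ((t - s) / (t + T)) ^ (1/2 - H)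
      + (1/2 - H) * incBeta (T / (t + T)) (H + 1/2) (1 - 2*H) * (1/t)
          * ((t / s) * (t / (t - s))) ^ (1/2 + H))

/-- The constant `C(H,ρ)`. -/
noncomputable def CHrho (H ρ : ℝ) : ℝ :=
  1 - ρ * betaFn (1/2 - H + ρ) (1/2 - H) * (1 - 2*H) / (1 + 2*H)

/-- The kernel `II(s;T,t)` from the proof of Lemma 2.1. -/
noncomputable def IIkernel (H T t s : ℝ) : ℝ :=
  (1/2 - H) * incBeta (T / (t + T)) (H + 1/2) (1 - 2*H) * (t / T) ^ (1/2 + H)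
    * (1 + T/t) * (s * (1 - s)) ^ (-(1/2 + H))

/-- Steinhaus-type argument: if `k (x + u) - k x` converges for every `u`, then for `x` large the
drop of `k` over intervals `[x, x + u]` with `u ≤ 1` is bounded uniformly in `u`. -/
lemma exists_local_drop_bound (k : ℝ → ℝ) (κ : ℝ) (hκ : 0 < κ) (hk : Measurable k)
    (hlim : ∀ u : ℝ, Tendsto (fun x => k (x + u) - k x) atTop (nhds (κ * u))) :
    ∃ M x0 : ℝ, ∀ x u : ℝ, x0 ≤ x → 0 ≤ u → u ≤ 1 → k x ≤ k (x + u) + M := by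
  -- The increment over a step of length at most 2 tends to at most `2 * κ`, so it is eventually
  -- below `c`; the bad steps therefore have measure tending to 0.
  set c : ℝ := 2 * κ + 1 with hc
  let A : ℝ → Set ℝ := fun x => Icc (0:ℝ) 2 ∩ {v | c < |k (x + v) - k x|}
  have hAm : ∀ x, MeasurableSet (A x) := by
    intro x
    refine measurableSet_Icc.inter (measurableSet_lt measurable_const ?_)
    have : Measurable fun v => k (x + v) - k x :=
      (hk.comp (measurable_const.add measurable_id)).sub_const _
    exact this.abs
  have hA0 : Tendsto (fun x => volume (A x)) atTop (nhds (volume (∅ : Set ℝ))) := by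
    refine tendsto_measure_of_ae_tendsto_indicator atTop MeasurableSet.empty hAm
      (B := Icc (0:ℝ) 2) measurableSet_Icc (by simp) (Eventually.of_forall fun x => inter_subset_left)
      (Eventually.of_forall fun v => ?_)
    by_cases hv : v ∈ Icc (0:ℝ) 2
    · have h1 : |κ * v| < c := by
        rw [abs_of_nonneg (mul_nonneg hκ.le hv.1)]
        nlinarith [hv.2]
      filter_upwards [(hlim v).abs.eventually (gt_mem_nhds h1)] with x hx
      simp only [mem_empty_iff_false, iff_false]
      intro hxA
      exact absurd hxA.2 (not_lt.2 hx.le)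
    · exact Eventually.of_forall fun x => by simp [A, hv]
  rw [measure_empty] at hA0
  have hev : ∀ᶠ x in atTop, volume (A x) < ENNReal.ofReal (1/2) :=
    hA0.eventually (gt_mem_nhds (by simp))
  obtain ⟨x0, hx0⟩ := eventually_atTop.1 hev
  refine ⟨2 * c, x0, fun x u hx hu0 hu1 => ?_⟩
  -- A point `x + w` comparable both with `x` and with `x + u`.
  obtain ⟨w, hw, hwx, hwu⟩ : ∃ w ∈ Icc (1:ℝ) 2, w ∉ A x ∧ w - u ∉ A (x + u) := by
    by_contra! hcon
    have hsub : Icc (1:ℝ) 2 ⊆ A x ∪ (fun w => w - u) ⁻¹' A (x + u) := by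
      intro w hw
      by_cases h : w ∈ A x
      · exact Or.inl h
      · exact Or.inr (hcon w hw h)
    have h1 := (measure_mono (μ := volume) hsub).trans (measure_union_le _ _)
    simp only [sub_eq_add_neg] at h1
    rw [measure_preimage_add_right, Real.volume_Icc] at h1
    have h2 := ENNReal.add_lt_add (hx0 x hx) (hx0 (x + u) (by linarith))
    rw [← ENNReal.ofReal_add (by norm_num) (by norm_num)] at h2
    norm_num at h1 h2
    exact absurd h1 (not_le.2 h2)
  have h1 : |k (x + w) - k x| ≤ c := by
    by_contra! h
    exact hwx ⟨⟨by linarith [hw.1], hw.2⟩, h⟩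
  have h2 : |k (x + w) - k (x + u)| ≤ c := by
    by_contra! h
    refine hwu ⟨⟨by linarith [hw.1], by linarith [hw.2]⟩, ?_⟩
    show c < |k (x + u + (w - u)) - k (x + u)|
    rwa [show x + u + (w - u) = x + w by ring]
  linarith [(abs_le.1 h1).1, (abs_le.1 h1).2, (abs_le.1 h2).1, (abs_le.1 h2).2]

/-- A function whose increments over unit steps are eventually positive is almost increasing. -/
lemma exists_almost_mono (k : ℝ → ℝ) (κ : ℝ) (hκ : 0 < κ) (hk : Measurable k)
    (hlim : ∀ u : ℝ, Tendsto (fun x => k (x + u) - k x) atTop (nhds (κ * u))) :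
    ∃ M x0 : ℝ, ∀ y x : ℝ, x0 ≤ y → y ≤ x → k y ≤ k x + M := by
  obtain ⟨M, x0, hM⟩ := exists_local_drop_bound k κ hκ hk hlim
  have hpos : ∀ᶠ x in atTop, 0 < k (x + 1) - k x :=
    (hlim 1).eventually (lt_mem_nhds (by simpa using hκ))
  obtain ⟨x1, hx1⟩ := eventually_atTop.1 hpos
  refine ⟨M, max x0 x1, fun y x hy hyx => ?_⟩
  have hy0 := (le_max_left _ _).trans hy
  have hy1 := (le_max_right _ _).trans hy
  have hiter : ∀ n : ℕ, ∀ z, x1 ≤ z → k z ≤ k (z + n) := by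
    intro n
    induction n with
    | zero => intro z _; simp
    | succ n ih =>
      intro z hz
      have h1 := ih z hz
      have h2 := hx1 (z + n) (by linarith [n.cast_nonneg (α := ℝ)])
      push_cast
      rw [← add_assoc]
      linarith
  have hn0 := Nat.floor_le (sub_nonneg.2 hyx)
  have hn1 := Nat.lt_floor_add_one (x - y)
  have h1 := hM y (x - y - ⌊x - y⌋₊) hy0 (by linarith) (by linarith)
  have h2 := hiter ⌊x - y⌋₊ (y + (x - y - ⌊x - y⌋₊)) (by linarith)
  rw [show y + (x - y - (⌊x - y⌋₊ : ℝ)) + (⌊x - y⌋₊ : ℝ) = x by ring] at h2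
  linarith

/-- Potter-type bound, valid on the whole range `0 < s ≤ 1` because the exponent `a ≤ 0` lets
local boundedness of `g` take care of the region where `t * s` stays bounded. -/
lemma exists_potter_bound (ρ a : ℝ) (ha0 : a ≤ 0) (haρ : a < ρ)
    (g : ℝ → ℝ) (hg_meas : Measurable g) (hg_pos : ∀ s : ℝ, 0 ≤ s → 0 < g s)
    (hg_loc : ∀ A : ℝ, ∃ C : ℝ, ∀ s ∈ Set.Icc (0:ℝ) A, g s ≤ C)
    (hg_rv : ∀ lam : ℝ, 0 < lam →
      Tendsto (fun t : ℝ => g (t * lam) / g t) atTop (nhds (lam ^ ρ))) :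
    ∃ C t0 : ℝ, 0 < t0 ∧ ∀ t s : ℝ, t0 ≤ t → 0 < s → s ≤ 1 → g (t * s) / g t ≤ C * s ^ a := by
  -- `k` is the logarithm of `x ^ (-a) * g x`, regularly varying of positive index, in the
  -- variable `log x`.
  obtain ⟨M, x0, hM⟩ := exists_almost_mono (fun x => -a * x + Real.log (g (Real.exp x)))
    (ρ - a) (by linarith)
    ((measurable_const.mul measurable_id).add
      (Real.measurable_log.comp (hg_meas.comp Real.measurable_exp))) (by
      intro u
      have h1 := (hg_rv (Real.exp u) (Real.exp_pos u)).comp Real.tendsto_exp_atTop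
      have h2 := (h1.log (Real.rpow_pos_of_pos (Real.exp_pos u) ρ).ne').const_add (-a * u)
      rw [Real.log_rpow (Real.exp_pos u), Real.log_exp] at h2
      refine (h2.congr fun x => ?_).trans_eq (by ring_nf)
      simp only [Function.comp]
      rw [← Real.exp_add, Real.log_div (hg_pos _ (Real.exp_pos _).le).ne'
        (hg_pos _ (Real.exp_pos _).le).ne']
      ring)
  have hh : ∀ x, 0 < x → Real.exp (-a * Real.log x + Real.log (g (Real.exp (Real.log x))))
      = x ^ (-a) * g x := by
    intro x hx
    rw [Real.exp_log hx, Real.exp_add, Real.exp_log (hg_pos x hx.le), Real.rpow_def_of_pos hx,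
      mul_comm (-a)]
  have hX := Real.exp_pos x0
  set X := Real.exp x0 with hXdef
  have hmono : ∀ y x, X ≤ y → y ≤ x → y ^ (-a) * g y ≤ Real.exp M * (x ^ (-a) * g x) := by
    intro y x hy hyx
    have hy0 := hX.trans_le hy
    have h := Real.exp_le_exp.2 (hM (Real.log y) (Real.log x)
      ((Real.le_log_iff_exp_le hy0).2 hy) (Real.log_le_log hy0 hyx))
    rw [Real.exp_add _ M, hh y hy0, hh x (hy0.trans_le hyx)] at h
    linarith
  obtain ⟨D, hD⟩ := hg_loc X
  have hgX := hg_pos X hX.le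
  have hD1 : g X ≤ D := hD X ⟨hX.le, le_rfl⟩
  have hXa : 0 < X ^ (-a) := Real.rpow_pos_of_pos hX _
  -- The factor `D / g X ≥ 1` covers the region `t * s < X`.
  have hK : ∀ y x, 0 < y → y ≤ x → X ≤ x →
      y ^ (-a) * g y ≤ (D / g X * Real.exp M) * (x ^ (-a) * g x) := by
    intro y x hy hyx hx
    have hx0 := hX.trans_le hx
    have hP : 0 < x ^ (-a) * g x := mul_pos (Real.rpow_pos_of_pos hx0 _) (hg_pos x hx0.le)
    have hDX : 1 ≤ D / g X := (one_le_div hgX).2 hD1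
    rcases le_total X y with h | h
    · refine (hmono y x h hyx).trans ?_
      refine mul_le_mul_of_nonneg_right ?_ hP.le
      nlinarith [Real.exp_pos M]
    · calc y ^ (-a) * g y ≤ X ^ (-a) * D := by
            gcongr
            · exact (hg_pos y hy.le).le
            · linarith
            · exact hD y ⟨hy.le, h⟩
        _ = D / g X * (X ^ (-a) * g X) := by field_simp
        _ ≤ D / g X * (Real.exp M * (x ^ (-a) * g x)) := by
            exact mul_le_mul_of_nonneg_left (hmono X x le_rfl hx) (zero_le_one.trans hDX)
        _ = _ := by ring
  refine ⟨D / g X * Real.exp M, X, hX, fun t s ht hs hs1 => ?_⟩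
  have ht0 := hX.trans_le ht
  have h := hK (t * s) t (mul_pos ht0 hs) (by nlinarith) ht
  have hta : 0 < t ^ (-a) := Real.rpow_pos_of_pos ht0 _
  have hsa : 0 < s ^ a := Real.rpow_pos_of_pos hs _
  rw [Real.mul_rpow ht0.le hs.le, Real.rpow_neg hs.le] at h
  rw [div_le_iff₀ (hg_pos t ht0.le)]
  have h3 : t ^ (-a) * (g (t * s)) ≤ t ^ (-a) * (D / g X * Real.exp M * s ^ a * g t) := by
    have := mul_le_mul_of_nonneg_right h hsa.le
    have e : t ^ (-a) * (s ^ a)⁻¹ * g (t * s) * s ^ a = t ^ (-a) * g (t * s) := by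
      field_simp
    rw [e] at this
    linarith
  exact le_of_mul_le_mul_left h3 hta

lemma intervalIntegrable_beta (p q : ℝ) (hp : 0 < p) (hq : 0 < q) :
    IntervalIntegrable (fun u : ℝ => u ^ (p - 1) * (1 - u) ^ (q - 1)) volume 0 1 := by
  have h := Complex.betaIntegral_convergent (u := p) (v := q) (by simpa) (by simpa)
  rw [intervalIntegrable_iff] at h ⊢
  refine IntegrableOn.congr_fun h.re (fun x hx => ?_) measurableSet_uIoc
  rw [uIoc_of_le zero_le_one] at hx
  have e : ((x : ℂ) ^ ((p : ℂ) - 1) * (1 - (x : ℂ)) ^ ((q : ℂ) - 1))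
      = ((x ^ (p - 1) * (1 - x) ^ (q - 1) : ℝ) : ℂ) := by
    rw [Complex.ofReal_mul, Complex.ofReal_cpow hx.1.le, Complex.ofReal_cpow (by linarith [hx.2])]
    push_cast
    rfl
  simp only [e]
  simp

/-- The integrand of `incBeta x p q` lies between `u ^ (p - 1)` and
`(1 - x) ^ (q - 1) * u ^ (p - 1)`, hence the two-sided bound. -/
lemma incBeta_bounds (p q x : ℝ) (hp : 0 < p) (hq : 0 < q) (hq1 : q ≤ 1) (hx0 : 0 < x)
    (hx1 : x < 1) :
    x ^ p / p ≤ incBeta x p q ∧ incBeta x p q ≤ (1 - x) ^ (q - 1) * (x ^ p / p) := by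
  have hI : ∫ u in (0:ℝ)..x, u ^ (p - 1) = x ^ p / p := by
    rw [integral_rpow (Or.inl (by linarith))]
    simp [hp.ne']
  have hi1 : IntervalIntegrable (fun u : ℝ => u ^ (p - 1)) volume 0 x :=
    intervalIntegrable_rpow' (by linarith)
  have hi2 : IntervalIntegrable (fun u : ℝ => u ^ (p - 1) * (1 - u) ^ (q - 1)) volume 0 x := by
    refine (intervalIntegrable_beta p q hp hq).mono_set ?_
    rw [uIcc_of_le hx0.le, uIcc_of_le zero_le_one]
    exact Icc_subset_Icc_right hx1.le
  unfold incBeta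
  rw [← hI, ← intervalIntegral.integral_const_mul]
  constructor
  · refine integral_mono_on hx0.le hi1 hi2 fun u hu => ?_
    have : 1 ≤ (1 - u) ^ (q - 1) := Real.one_le_rpow_of_pos_of_le_one_of_nonpos
      (by linarith [hu.2]) (by linarith [hu.1]) (by linarith)
    exact le_mul_of_one_le_right (Real.rpow_nonneg hu.1 _) this
  · refine integral_mono_on hx0.le hi2 (hi1.const_mul _) fun u hu => ?_
    rw [mul_comm]
    refine mul_le_mul_of_nonneg_right ?_ (Real.rpow_nonneg hu.1 _)
    exact Real.rpow_le_rpow_of_nonpos (by linarith) (by linarith [hu.2]) (by linarith)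

lemma tendsto_incBeta_mul (T p q : ℝ) (hT : 0 < T) (hp : 0 < p) (hq : 0 < q) (hq1 : q ≤ 1) :
    Tendsto (fun t : ℝ => incBeta (T / (t + T)) p q * (t / T) ^ p) atTop (nhds (1 / p)) := by
  have hx : Tendsto (fun t : ℝ => T / (t + T)) atTop (nhds 0) :=
    (tendsto_atTop_add_const_right _ T tendsto_id).const_div_atTop T
  have h1 : Tendsto (fun t : ℝ => 1 - T / (t + T)) atTop (nhds 1) := by
    simpa using hx.const_sub 1
  have hlo : Tendsto (fun t : ℝ => (1 - T / (t + T)) ^ p / p) atTop (nhds (1 / p)) := by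
    have := (h1.rpow_const (p := p) (Or.inl one_ne_zero)).div_const p
    rwa [Real.one_rpow] at this
  have hhi : Tendsto (fun t : ℝ => (1 - T / (t + T)) ^ (q - 1) * ((1 - T / (t + T)) ^ p / p)) atTop
      (nhds (1 / p)) := by
    have := (h1.rpow_const (p := q - 1) (Or.inl one_ne_zero)).mul hlo
    rwa [Real.one_rpow, one_mul] at this
  have key : ∀ t : ℝ, 0 < t → (T / (t + T)) ^ p * (t / T) ^ p = (1 - T / (t + T)) ^ p := by
    intro t ht
    rw [← Real.mul_rpow (by positivity) (by positivity)]
    congr 1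
    field_simp
    ring
  refine tendsto_of_tendsto_of_tendsto_of_le_of_le' hlo hhi ?_ ?_
  all_goals
    filter_upwards [eventually_gt_atTop 0] with t ht
    have hb := incBeta_bounds p q (T / (t + T)) hp hq hq1 (by positivity)
      ((div_lt_one (by positivity)).2 (by linarith))
    have hpos : 0 ≤ (t / T) ^ p := by positivity
    rw [← key t ht]
  · calc _ = (T / (t + T)) ^ p / p * (t / T) ^ p := by ring
      _ ≤ _ := mul_le_mul_of_nonneg_right hb.1 hpos
  · calc _ ≤ _ := mul_le_mul_of_nonneg_right hb.2 hpos
      _ = _ := by ring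

/-- Convergence (2.3) : for `g` positive, measurable, locally bounded and regularly varying
with index `ρ > -1/2 + H`,
`∫_0^1 II(s;T,t) g(ts)/g(t) ds → (1/2-H) B(1/2-H+ρ, 1/2-H)/(1/2+H)` as `t → ∞`. -/
theorem baxter_stmt4 (H T ρ : ℝ) (hH1 : 0 < H) (hH2 : H < 1/2) (hT : 0 < T)
    (hρ : -1/2 + H < ρ)
    (g : ℝ → ℝ) (hg_meas : Measurable g) (hg_pos : ∀ s : ℝ, 0 ≤ s → 0 < g s)
    (hg_loc : ∀ A : ℝ, ∃ C : ℝ, ∀ s ∈ Set.Icc (0:ℝ) A, g s ≤ C)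
    (hg_rv : ∀ lam : ℝ, 0 < lam →
      Tendsto (fun t : ℝ => g (t * lam) / g t) atTop (nhds (lam ^ ρ))) :
    Tendsto (fun t : ℝ => ∫ s in (0:ℝ)..1, IIkernel H T t s * (g (t * s) / g t))
      atTop (nhds ((1/2 - H) * betaFn (1/2 - H + ρ) (1/2 - H) / (1/2 + H))) := by
  set p : ℝ := 1/2 + H with hp
  have hp0 : 0 < p := by linarith
  -- The `t`-dependent prefactor of the kernel.
  have hcoef : Tendsto (fun t : ℝ => (1/2 - H) * incBeta (T / (t + T)) (H + 1/2) (1 - 2*H)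
      * (t / T) ^ p * (1 + T/t)) atTop (nhds ((1/2 - H) / p)) := by
    have h1 := tendsto_incBeta_mul T p (1 - 2*H) hT hp0 (by linarith) (by linarith)
    have h2 : Tendsto (fun t : ℝ => 1 + T / t) atTop (nhds 1) := by
      simpa using (tendsto_id.const_div_atTop T).const_add 1
    have h3 := (h1.const_mul (1/2 - H)).mul h2
    rw [show H + 1/2 = p by rw [hp]; ring]
    refine (h3.congr fun t => by ring).trans_eq (by ring_nf)
  -- An exponent `a ≤ 0` below `ρ` for which `s ^ a * s ^ (-p)` is still integrable at `0`.
  obtain ⟨a, ha1, ha2⟩ := exists_between (lt_min hρ (by linarith : -1/2 + H < 0))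
  have haρ := ha2.trans_le (min_le_left _ _)
  have ha0 := ha2.trans_le (min_le_right _ _)
  obtain ⟨C, t0, ht0, hC⟩ := exists_potter_bound ρ a ha0.le haρ g hg_meas hg_pos hg_loc hg_rv
  have hsplit : ∀ b s : ℝ, 0 < s → s ≤ 1 →
      (s * (1 - s)) ^ (-p) * s ^ b = s ^ (1/2 - H + b - 1) * (1 - s) ^ (1/2 - H - 1) := by
    intro b s hs hs1
    rw [Real.mul_rpow hs.le (by linarith), show 1/2 - H + b - 1 = -p + b by rw [hp]; ring,
      show 1/2 - H - 1 = -p by rw [hp]; ring, Real.rpow_add hs]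
    ring
  have hint : Tendsto (fun t : ℝ => ∫ s in (0:ℝ)..1, (s * (1 - s)) ^ (-p) * (g (t * s) / g t))
      atTop (nhds (betaFn (1/2 - H + ρ) (1/2 - H))) := by
    unfold betaFn incBeta
    refine intervalIntegral.tendsto_integral_filter_of_dominated_convergence
      (fun s => C * (s ^ (1/2 - H + a - 1) * (1 - s) ^ (1/2 - H - 1))) ?_ ?_ ?_ ?_
    · refine Eventually.of_forall fun t => Measurable.aestronglyMeasurable ?_
      have := hg_meas.comp (measurable_const_mul t)
      exact (by fun_prop : Measurable fun s : ℝ => (s * (1 - s)) ^ (-p)).mul (this.div_const _)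
    · filter_upwards [eventually_ge_atTop t0] with t ht
      refine Eventually.of_forall fun s hs => ?_
      rw [uIoc_of_le zero_le_one] at hs
      have h1 : 0 ≤ (s * (1 - s)) ^ (-p) :=
        Real.rpow_nonneg (mul_nonneg hs.1.le (by linarith [hs.2])) _
      have ht1 := ht0.trans_le ht
      have h2 : 0 ≤ g (t * s) / g t :=
        div_nonneg (hg_pos _ (mul_pos ht1 hs.1).le).le (hg_pos t ht1.le).le
      rw [Real.norm_of_nonneg (mul_nonneg h1 h2), ← hsplit a s hs.1 hs.2]
      calc _ ≤ _ := mul_le_mul_of_nonneg_left (hC t s ht hs.1 hs.2) h1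
        _ = _ := by ring
    · exact (intervalIntegrable_beta _ _ (by linarith) (by linarith)).const_mul C
    · refine Eventually.of_forall fun s hs => ?_
      rw [uIoc_of_le zero_le_one] at hs
      rw [← hsplit ρ s hs.1 hs.2]
      exact (hg_rv s hs.1).const_mul _
  refine ((hcoef.mul hint).congr fun t => ?_).trans_eq (by ring_nf)
  rw [← intervalIntegral.integral_const_mul]
  refine intervalIntegral.integral_congr fun s _ => ?_
  simp only [IIkernel, ← hp]
  ring
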